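/- Let n_1 ≥ 1, n_2 ≥ 1, n_3 ≥ 1 be integers and set N := n_1 + n_2. Then in ℚ(q) one has P(n_3, N) · [N−1 choose n_1] + q^{n_2} · P(n_3−1, N) · [N−1 choose n_1−1] = P(2n_2+n_3−1, n_1) · P(n_3, n_2). -/

import Mathlib

open scoped BigOperators

noncomputable section

/-- The field ℚ(q). -/
abbrev K : Type := RatFunc ℚ

/-- The variable q. -/
def qq : K := RatFunc.X

/-- The quantum integer [n] = 1 + q + ⋯ + q^{n-1}. -/
def qint (n : ℕ) : K := ∑ i ∈ Finset.range n, qq ^ i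

/-- The quantum factorial [n]! = [1][2]⋯[n]. -/
def qfact (n : ℕ) : K := ∏ i ∈ Finset.range n, qint (i + 1)

/-- The Gaussian binomial coefficient [n choose k] = [n]!/([k]!·[n-k]!),
with the convention that it is 0 when k > n. -/
def qbinom (n k : ℕ) : K :=
  if k ≤ n then qfact n / (qfact k * qfact (n - k)) else 0

/-- a_{(2m-1,N)} = [N+2m]/[2m] and a_{(2m,N)} = [2N+2m]/[N+2m]:
for odd j = 2m-1 this is [N+j+1]/[j+1], for even j = 2m this is [2N+j]/[N+j]. -/
def aB (j N : ℕ) : K :=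
  if Odd j then qint (N + j + 1) / qint (j + 1) else qint (2 * N + j) / qint (N + j)

/-- P(M,N) = ∏_{i=1}^{N}(1+q^i) · ∏_{j=1}^{M} a_{(j,N)}. -/
def P (M N : ℕ) : K :=
  (∏ i ∈ Finset.range N, (1 + qq ^ (i + 1))) * ∏ j ∈ Finset.range M, aB (j + 1) N

theorem qint_ne (n : ℕ) : qint (n + 1) ≠ 0 := by
  have h : qint (n + 1) = algebraMap (Polynomial ℚ) (RatFunc ℚ)
      (∑ i ∈ Finset.range (n + 1), Polynomial.X ^ i) := by
    simp [qint, qq, map_sum]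
  rw [h]
  intro h0
  have h1 := (map_eq_zero_iff _ (RatFunc.algebraMap_injective ℚ)).1 h0
  have h2 := congrArg (fun p => Polynomial.coeff p 0) h1
  simp [Finset.sum_range_succ', Polynomial.coeff_X_pow] at h2

theorem qint_ne' (n : ℕ) (h : 0 < n) : qint n ≠ 0 := by
  obtain ⟨m, rfl⟩ : ∃ m, n = m + 1 := ⟨n - 1, by omega⟩
  exact qint_ne m

theorem qint_mul (n : ℕ) : qint n * (qq - 1) = qq ^ n - 1 := by
  simpa [qint] using geom_sum_mul qq n

theorem qm1_ne : qq - 1 ≠ 0 := by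
  intro h
  have h1 := qint_mul 1
  have h2 := qint_mul 2
  have h3 : qq = 1 := sub_eq_zero.1 h
  have h4 : algebraMap (Polynomial ℚ) (RatFunc ℚ) Polynomial.X
      = algebraMap (Polynomial ℚ) (RatFunc ℚ) 1 := by
    simpa [qq] using h3
  have h5 := RatFunc.algebraMap_injective ℚ h4
  have h6 := congrArg (fun p => Polynomial.coeff p 0) h5
  simp at h6

theorem qfact_ne (n : ℕ) : qfact n ≠ 0 :=
  Finset.prod_ne_zero_iff.2 fun i _ => qint_ne i

theorem qfact_succ (n : ℕ) : qfact (n + 1) = qfact n * qint (n + 1) := by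
  simp [qfact, Finset.prod_range_succ]

def EE (n : ℕ) : K := ∏ i ∈ Finset.range n, qint (2 * i + 2)

theorem EE_ne (n : ℕ) : EE n ≠ 0 :=
  Finset.prod_ne_zero_iff.2 fun i _ => qint_ne (2 * i + 1)

theorem EE_succ (n : ℕ) : EE (n + 1) = EE n * qint (2 * n + 2) := by
  simp [EE, Finset.prod_range_succ]

theorem qint_double (n : ℕ) : qint (2 * n) = qint n * (1 + qq ^ n) := by
  apply mul_right_cancel₀ qm1_ne
  have a := qint_mul (2 * n)
  have b := qint_mul n
  rw [a, mul_right_comm, b]; ring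

theorem P_zero (N : ℕ) : P 0 N = EE N / qfact N := by
  rw [eq_div_iff (qfact_ne N)]
  induction N with
  | zero => simp [P, EE, qfact]
  | succ n ih =>
    rw [EE_succ, qfact_succ, ← ih, show 2 * n + 2 = 2 * (n + 1) by ring, qint_double]
    simp only [P, Finset.prod_range_succ, Finset.prod_range_zero]
    ring

theorem P_succ (M N : ℕ) : P (M + 1) N = P M N * aB (M + 1) N := by
  simp only [P, Finset.prod_range_succ]; ring

theorem P_odd_step (k N : ℕ) :
    P (2 * k + 1) N = P (2 * k) N * (qint (N + 2 * k + 2) / qint (2 * k + 2)) := by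
  rw [P_succ, aB, if_pos ⟨k, rfl⟩]; rfl

theorem P_even_step (k N : ℕ) :
    P (2 * k + 2) N = P (2 * k + 1) N * (qint (2 * (N + k) + 2) / qint (N + 2 * k + 2)) := by
  rw [P_succ, aB, if_neg (by simp [Nat.not_odd_iff_even, Nat.even_add_one])]
  congr 3 <;> ring

theorem P_even (k N : ℕ) : P (2 * k) N = EE (N + k) / (qfact N * EE k) := by
  induction k with
  | zero => simp [P_zero, EE]
  | succ k ih =>
    rw [show 2 * (k + 1) = 2 * k + 2 by ring, P_even_step, P_odd_step, ih,
      ← add_assoc, EE_succ, EE_succ]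
    have := qint_ne (N + 2 * k + 1)
    have := qint_ne (2 * k + 1)
    have := EE_ne k
    have := qfact_ne N
    field_simp

theorem P_odd (k N : ℕ) :
    P (2 * k + 1) N = EE (N + k) * qint (N + 2 * k + 2) / (qfact N * EE (k + 1)) := by
  rw [P_odd_step, P_even, EE_succ]
  have := qint_ne (2 * k + 1)
  have := EE_ne k
  have := qfact_ne N
  field_simp

theorem qint_eq (n : ℕ) : qint n = (qq ^ n - 1) / (qq - 1) := by
  rw [eq_div_iff qm1_ne, qint_mul]

theorem key_even (a b c : ℕ) :
    qint (2 * (a + b) + c) * qint b + qq ^ b * qint (a + b + c) * qint a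
      = qint (a + b) * qint (a + 2 * b + c) := by
  have := qm1_ne
  simp only [qint_eq]
  field_simp
  ring

theorem key_odd (a b c : ℕ) :
    qint (a + b + c) * qint b + qq ^ b * qint c * qint a
      = qint (a + b) * qint (b + c) := by
  have := qm1_ne
  simp only [qint_eq]
  field_simp
  ring

theorem stmt_4 (n1 n2 n3 : ℕ) (h1 : 1 ≤ n1) (h2 : 1 ≤ n2) (h3 : 1 ≤ n3) :
    P n3 (n1 + n2) * qbinom (n1 + n2 - 1) n1
        + qq ^ n2 * P (n3 - 1) (n1 + n2) * qbinom (n1 + n2 - 1) (n1 - 1)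
      = P (2 * n2 + n3 - 1) n1 * P n3 n2 := by
  obtain ⟨a, rfl⟩ : ∃ m, n1 = m + 1 := ⟨n1 - 1, by omega⟩
  obtain ⟨b, rfl⟩ : ∃ m, n2 = m + 1 := ⟨n2 - 1, by omega⟩
  have e1 : qbinom (a + 1 + (b + 1) - 1) (a + 1)
      = qfact (a + b + 1) / (qfact (a + 1) * qfact b) := by
    rw [qbinom, if_pos (by omega)]; congr 3 <;> congr 1 <;> omega
  have e2 : qbinom (a + 1 + (b + 1) - 1) (a + 1 - 1)
      = qfact (a + b + 1) / (qfact a * qfact (b + 1)) := by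
    rw [qbinom, if_pos (by omega)]; congr 3 <;> congr 1 <;> omega
  rw [e1, e2]
  have f1 := qfact_ne a
  have f2 := qfact_ne b
  have f3 := qfact_ne (a + b + 1)
  have g1 := qint_ne a
  have g2 := qint_ne b
  have g3 := qint_ne (a + b + 1)
  rcases Nat.even_or_odd' n3 with ⟨k, rfl | rfl⟩
  · obtain ⟨k, rfl⟩ : ∃ m, k = m + 1 := ⟨k - 1, by omega⟩
    rw [show 2 * (k + 1) - 1 = 2 * k + 1 by omega,
      show 2 * (b + 1) + 2 * (k + 1) - 1 = 2 * (b + 1 + k) + 1 by omega,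
      P_odd, P_odd, P_even, P_even]
    have key := key_even (a + 1) (b + 1) (2 * k + 2)
    rw [show a + 1 + (b + 1) + (k + 1) = (a + b + k + 2) + 1 by ring,
      show a + 1 + (b + 1) + k = a + b + k + 2 by ring,
      show a + 1 + (b + 1 + k) = a + b + k + 2 by ring,
      show b + 1 + (k + 1) = b + 1 + k + 1 by ring,
      show a + 1 + 2 * (b + 1 + k) + 2 = a + 2 * b + 2 * k + 5 by ring,
      show a + 1 + (b + 1) + 2 * k + 2 = a + b + 2 * k + 4 by ring,
      show a + 1 + (b + 1) = a + b + 1 + 1 by ring,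
      EE_succ (a + b + k + 2), qfact_succ (a + b + 1), qfact_succ a, qfact_succ b,
      show 2 * (a + b + k + 2) + 2 = 2 * a + 2 * b + 2 * k + 6 by ring]
    rw [show 2 * (a + 1 + (b + 1)) + (2 * k + 2) = 2 * a + 2 * b + 2 * k + 6 by ring,
      show a + 1 + (b + 1) + (2 * k + 2) = a + b + 2 * k + 4 by ring,
      show a + 1 + 2 * (b + 1) + (2 * k + 2) = a + 2 * b + 2 * k + 5 by ring,
      show a + 1 + (b + 1) = a + b + 1 + 1 by ring] at key
    have w1 := EE_ne (k + 1)
    have w2 := EE_ne (b + 1 + k + 1)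
    field_simp
    linear_combination EE (a + b + k + 2) * key
  · rw [show 2 * k + 1 - 1 = 2 * k by omega,
      show 2 * (b + 1) + (2 * k + 1) - 1 = 2 * (b + 1 + k) by omega,
      P_odd, P_odd, P_even, P_even]
    have key := key_odd (a + 1) (b + 1) (2 * k + 2)
    rw [show a + 1 + (b + 1) + k = a + b + k + 2 by ring,
      show a + 1 + (b + 1 + k) = a + b + k + 2 by ring,
      show a + 1 + (b + 1) + 2 * k + 2 = a + b + 2 * k + 4 by ring,
      show b + 1 + 2 * k + 2 = b + 2 * k + 3 by ring,
      show a + 1 + (b + 1) = a + b + 1 + 1 by ring,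
      EE_succ k, qfact_succ (a + b + 1), qfact_succ a, qfact_succ b]
    rw [show a + 1 + (b + 1) + (2 * k + 2) = a + b + 2 * k + 4 by ring,
      show b + 1 + (2 * k + 2) = b + 2 * k + 3 by ring,
      show a + 1 + (b + 1) = a + b + 1 + 1 by ring] at key
    have w1 := EE_ne k
    have w2 := EE_ne (b + 1 + k)
    have w3 := qint_ne (2 * k + 1)
    field_simp
    linear_combination EE (a + b + k + 2) * key
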